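/- Let k ≥ 2 be an integer. Let S ⊂ ℍ be a finite union of SL₂(ℤ)-orbits and let f : ℍ ∖ S → ℂ be holomorphic with f(γz) = (cz+d)^{2k}·f(z) for all γ = (a b; c d) ∈ SL₂(ℤ), and such that for every ϱ ∈ S there exists a REAL number a_ϱ for which z ↦ f(z) − a_ϱ·((z−ϱ)(z−conj(ϱ))/(ϱ−conj(ϱ)))^{−k} is bounded on a punctured neighborhood of ϱ. Then for every primitive hyperbolic γ ∈ SL₂(ℤ) and every z₀ ∈ ℍ ∖ S, the value Re( (i/√(d_γ))^{k−1} ∫_σ f(z)·Q_γ(z,1)^{k−1} dz ) is the same for all piecewise continuously differentiable paths σ in ℍ ∖ S from z₀ to γz₀. -/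

import Mathlib

open Complex ComplexConjugate Metric Set MeasureTheory

noncomputable section

/-- The upper half-plane, as a subset of `ℂ`. -/
def UH : Set ℂ := {z | 0 < z.im}

abbrev SL2Z := Matrix.SpecialLinearGroup (Fin 2) ℤ

/-- The Möbius action `γz = (az+b)/(cz+d)` of `SL₂(ℤ)` on the upper half-plane
(written as a map on `ℂ`). -/
def moeb (γ : SL2Z) (z : ℂ) : ℂ :=
  ((γ.1 0 0 : ℂ) * z + (γ.1 0 1 : ℂ)) / ((γ.1 1 0 : ℂ) * z + (γ.1 1 1 : ℂ))

/-- The `SL₂(ℤ)`-orbit of a point `ϱ`. -/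
def orbit (ϱ : ℂ) : Set ℂ := {z | ∃ γ : SL2Z, z = moeb γ ϱ}

/-- `γ ∈ SL₂(ℤ)` is hyperbolic if `|a + d| > 2`. -/
def IsHyperbolic (γ : SL2Z) : Prop := 2 < |γ.1 0 0 + γ.1 1 1|

/-- `γ ∈ SL₂(ℤ)` is primitive if it is not a power `γ₀^m`, `m ≥ 2`, of another element. -/
def IsPrimitive (γ : SL2Z) : Prop := ¬∃ (γ₀ : SL2Z) (m : ℕ), 2 ≤ m ∧ γ = γ₀ ^ m

/-- The binary quadratic form `Q_γ(z,1) = cz² + (d−a)z − b` attached to `γ`. -/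
def Qpoly (γ : SL2Z) (z : ℂ) : ℂ :=
  (γ.1 1 0 : ℂ) * z ^ 2 + ((γ.1 1 1 - γ.1 0 0 : ℤ) : ℂ) * z - (γ.1 0 1 : ℂ)

/-- The discriminant `d_γ = (a+d)² − 4` of `Q_γ`. -/
def discr (γ : SL2Z) : ℝ := ((γ.1 0 0 + γ.1 1 1 : ℤ) : ℝ) ^ 2 - 4

/-- The factor `(i/√(d_γ))^(k−1)` appearing in the geodesic pairing. -/
def geodFactor (k : ℕ) (γ : SL2Z) : ℂ := (Complex.I / (Real.sqrt (discr γ) : ℂ)) ^ (k - 1)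

/-- Complex line integral of `f` along the path `σ : [0,1] → ℂ`. -/
def pathInt (f : ℂ → ℂ) (σ : ℝ → ℂ) : ℂ := ∫ t in (0 : ℝ)..1, f (σ t) * deriv σ t

/-- `σ : [0,1] → ℂ` is a piecewise continuously differentiable path. -/
def PiecewiseC1 (σ : ℝ → ℂ) : Prop :=
  ContinuousOn σ (Set.Icc 0 1) ∧
    ∃ (n : ℕ) (t : ℕ → ℝ), 0 < n ∧ t 0 = 0 ∧ t n = 1 ∧ (∀ i < n, t i ≤ t (i + 1)) ∧
      ∀ i < n, ContDiffOn ℝ 1 σ (Set.Icc (t i) (t (i + 1)))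

/-- The elliptic pole term `((z−ϱ)(z−conj ϱ)/(ϱ−conj ϱ))^(−k)`. -/
def polePart (k : ℕ) (ϱ z : ℂ) : ℂ :=
  ((z - ϱ) * (z - conj ϱ) / (ϱ - conj ϱ)) ^ (-(k : ℤ))

/-!
It suffices that the real `1`-form `Re (i ^ (k - 1) f Q ^ (k - 1) dz)` is the differential of a
function on a disc containing both paths, away from `S`. On such a disc `f` is the sum of a
holomorphic function, which contributes an exact form, and finitely many real multiples of pole
parts at points `ρ ∈ S`. For the pole part at `ρ`, write the form in the elliptic coordinate
`w = (z - ρ) / (z - conj ρ)`. It becomes the real part of `g(w) dw / w`, where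
`g = (a / w + m + conj a * w) ^ (k - 1)` with `m` real: this is where the factor `i ^ (k - 1)` and
the reality of `Q` enter. So `g` is real on the unit circle, `g(w) dw / w` pulls back under
`w = exp u` to `g (exp u) du`, and the integral of this over a period from `0` to `2πi` is purely
imaginary. Hence a primitive of the pullback has `2πi`-periodic real part, which descends to `w`.
-/

open Filter Topology Asymptotics
open scoped Real MatrixGroups UpperHalfPlane

/-- The real-linear form `v ↦ Re (a v)`, that is, `Re (a dz)` as a cotangent vector; bundled so as
to be linear in `a`. -/
def reForm : ℂ →L[ℝ] ℂ →L[ℝ] ℝ :=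
  ContinuousLinearMap.compL ℝ ℂ ℂ ℝ reCLM ∘L ContinuousLinearMap.mul ℝ ℂ

lemma reForm_apply (a v : ℂ) : reForm a v = (a * v).re := rfl

/-- The `1`-form `Re (g(z) dz)` is exact on `U`: it is the differential of a real function. -/
def HasRealPrimitiveOn (g : ℂ → ℂ) (U : Set ℂ) : Prop :=
  ∃ H : ℂ → ℝ, ∀ z ∈ U, HasFDerivAt H (reForm (g z)) z

lemma hasFDerivAt_re_of_hasDerivAt {F : ℂ → ℂ} {a z : ℂ} (h : HasDerivAt F a z) :
    HasFDerivAt (fun z => (F z).re) (reForm a) z :=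
  (reCLM.hasFDerivAt.comp z (h.hasFDerivAt.restrictScalars ℝ)).congr_fderiv <| by
    ext v; simp [reForm_apply, mul_comm]

lemma hasFDerivAt_comp_of_hasDerivAt {H : ℂ → ℝ} {w : ℂ → ℂ} {a w' z : ℂ}
    (hH : HasFDerivAt H (reForm a) (w z)) (hw : HasDerivAt w w' z) :
    HasFDerivAt (H ∘ w) (reForm (a * w')) z :=
  (hH.comp z (hw.hasFDerivAt.restrictScalars ℝ)).congr_fderiv <| by
    ext v; simp [reForm_apply, mul_comm, mul_left_comm]

namespace HasRealPrimitiveOn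

variable {g g₁ g₂ : ℂ → ℂ} {U V : Set ℂ}

lemma of_isExactOn (h : IsExactOn g U) : HasRealPrimitiveOn g U :=
  let ⟨F, hF⟩ := h
  ⟨fun z => (F z).re, fun z hz => hasFDerivAt_re_of_hasDerivAt (hF z hz)⟩

lemma mono (h : HasRealPrimitiveOn g V) (hUV : U ⊆ V) : HasRealPrimitiveOn g U :=
  let ⟨H, hH⟩ := h
  ⟨H, fun z hz => hH z (hUV hz)⟩

lemma congr (h : HasRealPrimitiveOn g₁ U) (hg : EqOn g₂ g₁ U) : HasRealPrimitiveOn g₂ U :=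
  let ⟨H, hH⟩ := h
  ⟨H, fun z hz => by rw [hg hz]; exact hH z hz⟩

lemma add (h₁ : HasRealPrimitiveOn g₁ U) (h₂ : HasRealPrimitiveOn g₂ U) :
    HasRealPrimitiveOn (fun z => g₁ z + g₂ z) U :=
  let ⟨H₁, hH₁⟩ := h₁
  let ⟨H₂, hH₂⟩ := h₂
  ⟨H₁ + H₂, fun z hz => by rw [map_add]; exact (hH₁ z hz).add (hH₂ z hz)⟩

lemma ofReal_mul (h : HasRealPrimitiveOn g U) (r : ℝ) :
    HasRealPrimitiveOn (fun z => r * g z) U :=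
  let ⟨H, hH⟩ := h
  ⟨r • H, fun z hz => by
    simpa only [← real_smul, map_smul] using (hH z hz).const_smul r⟩

lemma sum {ι : Type*} {T : Finset ι} {g : ι → ℂ → ℂ}
    (h : ∀ i ∈ T, HasRealPrimitiveOn (g i) U) :
    HasRealPrimitiveOn (fun z => ∑ i ∈ T, g i z) U := by
  choose! H hH using h
  exact ⟨fun z => ∑ i ∈ T, H i z, fun z hz => by
    rw [map_sum]; exact .fun_sum fun i hi => hH i hi z hz⟩

lemma comp {w w' : ℂ → ℂ} (h : HasRealPrimitiveOn g V)
    (hw : ∀ z ∈ U, HasDerivAt w (w' z) z) (hUV : MapsTo w U V) :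
    HasRealPrimitiveOn (fun z => g (w z) * w' z) U :=
  let ⟨H, hH⟩ := h
  ⟨H ∘ w, fun z hz => hasFDerivAt_comp_of_hasDerivAt (hH _ (hUV hz)) (hw z hz)⟩

end HasRealPrimitiveOn

lemma periodic_re_of_hasDerivAt {F G : ℂ → ℂ} {T : ℂ} (hG : ∀ u, HasDerivAt G (F u) u)
    (hF : Function.Periodic F T) (hre : ∀ t : ℝ, (F (t * T) * T).re = 0) :
    Function.Periodic (fun u => (G u).re) T := by
  have hline (t : ℝ) : HasDerivAt (fun t : ℝ => (G (t * T)).re) 0 t := by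
    have hmul : HasDerivAt (fun t : ℝ => (t : ℂ) * T) T t := by
      simpa using ofRealCLM.hasDerivAt.mul_const T
    exact ((hasFDerivAt_re_of_hasDerivAt (hG (t * T))).comp_hasDerivAt t hmul).congr_deriv (hre t)
  have hshift (u : ℂ) : HasDerivAt (fun u => G (u + T) - G u) 0 u :=
    (((hG (u + T)).comp_add_const u T).sub (hG u)).congr_deriv (sub_eq_zero.2 (hF u))
  intro u
  have h₁ : G (u + T) - G u = G T - G 0 := by
    simpa using is_const_of_deriv_eq_zero (fun u => (hshift u).differentiableAt)
      (fun u => (hshift u).deriv) u 0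
  have h₂ : (G T).re = (G 0).re := by
    simpa using is_const_of_deriv_eq_zero (fun t => (hline t).differentiableAt)
      (fun t => (hline t).deriv) 1 0
  have h₃ := congrArg re h₁
  simp only [sub_re] at h₃
  linarith

lemma eq_of_exp_eq_of_periodic {α : Type*} {P : ℂ → α} (hP : Function.Periodic P (2 * π * I))
    {u v : ℂ} (h : exp u = exp v) : P u = P v := by
  obtain ⟨n, rfl⟩ := exp_eq_exp_iff_exists_int.1 h
  exact hP.int_mul n v

theorem hasRealPrimitiveOn_mul_inv {g : ℂ → ℂ} (hg : DifferentiableOn ℂ g {0}ᶜ)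
    (hreal : ∀ w, ‖w‖ = 1 → (g w).im = 0) :
    HasRealPrimitiveOn (fun w => g w * w⁻¹) {0}ᶜ := by
  have hgexp : Differentiable ℂ (g ∘ exp) := fun u =>
    (hg.differentiableAt (isOpen_compl_singleton.mem_nhds (exp_ne_zero u))).comp u
      differentiableAt_exp
  obtain ⟨G, hG⟩ := hgexp.isExactOn_univ
  have hper : Function.Periodic (fun u => (G u).re) (2 * π * I) := by
    refine periodic_re_of_hasDerivAt (fun u => hG u (mem_univ u))
      (exp_periodic.comp g) fun t => ?_
    have : (g (exp (t * (2 * π * I)))).im = 0 :=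
      hreal _ (by simpa [mul_assoc] using norm_exp_ofReal_mul_I (t * (2 * π)))
    simp [this]
  refine ⟨fun w => (G (log w)).re, fun w₀ (hw₀ : w₀ ≠ 0) => ?_⟩
  -- The branch `w ↦ log w₀ + log (w / w₀)` of the logarithm is smooth at `w₀`, unlike `log` itself.
  have hbranch : HasDerivAt (fun w => log w₀ + log (w / w₀)) w₀⁻¹ w₀ := by
    simpa [hw₀] using (((hasDerivAt_id w₀).div_const w₀).clog (by simp [hw₀])).const_add (log w₀)
  have hH := hasFDerivAt_comp_of_hasDerivAt (hasFDerivAt_re_of_hasDerivAt (hG _ (mem_univ _)))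
    hbranch
  simp only [Function.comp_apply, div_self hw₀, log_one, add_zero, exp_log hw₀] at hH
  refine hH.congr_of_eventuallyEq ?_
  filter_upwards [isOpen_ne.mem_nhds hw₀] with w hw
  refine eq_of_exp_eq_of_periodic hper ?_
  rw [exp_add, exp_log hw, exp_log hw₀, exp_log (div_ne_zero hw hw₀), mul_div_cancel₀ _ hw₀]

lemma polePart_eq_pow (k : ℕ) (ρ z : ℂ) : polePart k ρ z = polePart 1 ρ z ^ k := by
  simp only [polePart, Nat.cast_one, zpow_neg, zpow_natCast, zpow_one, inv_pow]

/-- The elliptic coordinate at `ρ`: the Cayley map sending `ρ` to `0` and `conj ρ` to `∞`; it maps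
the real line to the unit circle. -/
def cayley (ρ z : ℂ) : ℂ := (z - ρ) / (z - conj ρ)

/-- The quadratic polynomial `A z² + B z + C` with real coefficients. -/
def realQuadratic (A B C : ℝ) (z : ℂ) : ℂ := A * z ^ 2 + B * z + C

lemma differentiable_realQuadratic (A B C : ℝ) : Differentiable ℂ (realQuadratic A B C) := by
  unfold realQuadratic
  fun_prop

section Elliptic

variable {ρ z : ℂ}

lemma sub_ne_zero_of_mem_compl_pair (hz : z ∈ ({ρ, conj ρ}ᶜ : Set ℂ)) :
    z - ρ ≠ 0 ∧ z - conj ρ ≠ 0 := by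
  simpa [sub_ne_zero] using hz

lemma differentiableAt_polePart (k : ℕ) (hρ : ρ.im ≠ 0) (hz : z ∈ ({ρ, conj ρ}ᶜ : Set ℂ)) :
    DifferentiableAt ℂ (polePart k ρ) z := by
  obtain ⟨h₁, h₂⟩ := sub_ne_zero_of_mem_compl_pair hz
  have hsub : ρ - conj ρ ≠ 0 := by simpa [sub_conj] using hρ
  exact DifferentiableAt.zpow (by fun_prop) (.inl (div_ne_zero (mul_ne_zero h₁ h₂) hsub))

lemma cayley_ne_zero (hz : z ∈ ({ρ, conj ρ}ᶜ : Set ℂ)) : cayley ρ z ≠ 0 :=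
  div_ne_zero (sub_ne_zero_of_mem_compl_pair hz).1 (sub_ne_zero_of_mem_compl_pair hz).2

lemma hasDerivAt_cayley (hz : z ∈ ({ρ, conj ρ}ᶜ : Set ℂ)) :
    HasDerivAt (cayley ρ) (cayley ρ z * polePart 1 ρ z) z := by
  obtain ⟨h₁, h₂⟩ := sub_ne_zero_of_mem_compl_pair hz
  refine (((hasDerivAt_id z).sub_const ρ).div ((hasDerivAt_id z).sub_const _) h₂).congr_deriv ?_
  simp only [cayley, polePart, id, Nat.cast_one, zpow_neg_one]
  field_simp
  ring

lemma realQuadratic_mul_sub_conj_sq (A B C : ℝ) (ρ z : ℂ) :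
    realQuadratic A B C z * (ρ - conj ρ) ^ 2 =
      realQuadratic A B C ρ * (z - conj ρ) ^ 2
        - (2 * (A * normSq ρ + B * ρ.re + C) : ℝ) * ((z - ρ) * (z - conj ρ))
        + conj (realQuadratic A B C ρ) * (z - ρ) ^ 2 := by
  have hre : (2 * ρ.re : ℂ) = ρ + conj ρ := by rw [add_conj]; push_cast; ring
  simp only [realQuadratic, map_add, map_mul, map_pow, conj_ofReal]
  push_cast
  rw [← mul_conj]
  linear_combination ((B : ℂ) * ((z - ρ) * (z - conj ρ))) * hre

lemma exists_I_mul_realQuadratic_mul_polePart_one (A B C : ℝ) (hρ : ρ.im ≠ 0) :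
    ∃ (a : ℂ) (m : ℝ), ∀ z ∈ ({ρ, conj ρ}ᶜ : Set ℂ),
      I * realQuadratic A B C z * polePart 1 ρ z =
        a * (cayley ρ z)⁻¹ + m + conj a * cayley ρ z := by
  set κ : ℝ := (2 * ρ.im)⁻¹
  have hη : (ρ.im : ℂ) ≠ 0 := ofReal_ne_zero.2 hρ
  have hsub : ρ - conj ρ = 2 * ρ.im * I := by rw [sub_conj]; push_cast; ring
  have hsub₀ : ρ - conj ρ ≠ 0 := by simp [hsub, hη]
  have hκ : (κ : ℂ) = I / (ρ - conj ρ) := by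
    rw [hsub]; simp only [κ]; push_cast; field_simp
  refine ⟨κ * realQuadratic A B C ρ, -(κ * (2 * (A * normSq ρ + B * ρ.re + C))), fun z hz => ?_⟩
  obtain ⟨h₁, h₂⟩ := sub_ne_zero_of_mem_compl_pair hz
  have hq := eq_div_of_mul_eq (pow_ne_zero 2 hsub₀) (realQuadratic_mul_sub_conj_sq A B C ρ z)
  rw [hq, ofReal_neg, ofReal_mul κ, map_mul, conj_ofReal, hκ]
  simp only [cayley, polePart, Nat.cast_one, zpow_neg_one]
  field_simp
  ring

lemma im_trinomial_pow_eq_zero (a : ℂ) (m : ℝ) (N : ℕ) {w : ℂ} (hw : ‖w‖ = 1) :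
    ((a * w⁻¹ + m + conj a * w) ^ N).im = 0 := by
  rw [← conj_eq_iff_im, map_pow, inv_eq_conj hw]
  simp only [map_add, map_mul, conj_conj, conj_ofReal]
  ring

theorem hasRealPrimitiveOn_polePart (N : ℕ) (A B C : ℝ) (hρ : ρ.im ≠ 0) :
    HasRealPrimitiveOn (fun z => I ^ N * (polePart (N + 1) ρ z * realQuadratic A B C z ^ N))
      {ρ, conj ρ}ᶜ := by
  obtain ⟨a, m, htri⟩ := exists_I_mul_realQuadratic_mul_polePart_one A B C hρ
  have hg : DifferentiableOn ℂ (fun w : ℂ => (a * w⁻¹ + m + conj a * w) ^ N) {0}ᶜ := by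
    intro w (hw : w ≠ 0)
    fun_prop (disch := exact hw)
  refine ((hasRealPrimitiveOn_mul_inv hg fun w => im_trinomial_pow_eq_zero a m N).comp
    (fun z => hasDerivAt_cayley) fun z => cayley_ne_zero).congr fun z hz => ?_
  beta_reduce
  rw [← htri z hz, mul_assoc, inv_mul_cancel_left₀ (cayley_ne_zero hz), polePart_eq_pow]
  ring

end Elliptic

lemma exists_differentiableOn_eqOn_sdiff_of_isBigO_one {E : Type*} [NormedAddCommGroup E]
    [NormedSpace ℂ E] [CompleteSpace E] {V T : Set ℂ} (hV : IsOpen V) (hT : T.Finite) {h : ℂ → E}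
    (hd : DifferentiableOn ℂ h (V \ T))
    (hb : ∀ ρ ∈ V ∩ T, h =O[𝓝[≠] ρ] (fun _ => (1 : ℝ))) :
    ∃ g : ℂ → E, DifferentiableOn ℂ g V ∧ EqOn g h (V \ T) := by
  induction T, hT using Set.Finite.induction_on generalizing h with
  | empty => exact ⟨h, by simpa using hd, fun _ _ => rfl⟩
  | @insert ρ T hρT hT ih =>
    by_cases hρV : ρ ∈ V
    · set h₁ := Function.update h ρ (limUnder (𝓝[≠] ρ) h)
      have heq {z : ℂ} (hz : z ≠ ρ) : h₁ z = h z := Function.update_of_ne hz _ _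
      have hd₁ : DifferentiableOn ℂ h₁ (V \ T) := by
        refine differentiableOn_update_limUnder_of_isLittleO
          ((hV.sdiff hT.isClosed).mem_nhds ⟨hρV, hρT⟩) ?_ ?_
        · rwa [Set.sdiff_sdiff, union_singleton]
        · refine IsBoundedUnder.isLittleO_sub_self_inv ((isBigO_one_iff ℝ).1 ?_)
          exact (hb ρ ⟨hρV, mem_insert ρ T⟩).sub (isBigO_const_const _ one_ne_zero _)
      obtain ⟨g, hg, hgh⟩ := ih hd₁ fun ρ' hρ' => by
        have hne : ρ' ≠ ρ := fun h => hρT (h ▸ hρ'.2)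
        refine (hb ρ' ⟨hρ'.1, mem_insert_of_mem ρ hρ'.2⟩).congr' ?_ EventuallyEq.rfl
        filter_upwards [mem_nhdsWithin_of_mem_nhds (isOpen_ne.mem_nhds hne)] with z hz
        exact (heq hz).symm
      refine ⟨g, hg, fun z hz => ?_⟩
      simp only [Set.mem_sdiff, mem_insert_iff, not_or] at hz
      exact (hgh ⟨hz.1, hz.2.2⟩).trans (heq hz.2.1)
    · have hsub : V \ insert ρ T = V \ T := by
        rw [insert_eq, ← Set.sdiff_sdiff, sdiff_singleton_eq_self hρV]
      rw [hsub] at hd ⊢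
      exact ih hd fun ρ' hρ' => hb ρ' ⟨hρ'.1, mem_insert_of_mem ρ hρ'.2⟩

/-- `f` has at `ρ` an elliptic pole of order `k` with real coefficient: subtracting a real multiple
of `polePart k ρ` leaves a function bounded near `ρ`. -/
def HasRealEllipticPoleAt (k : ℕ) (f : ℂ → ℂ) (ρ : ℂ) : Prop :=
  ∃ a : ℝ, (fun z => f z - a * polePart k ρ z) =O[𝓝[≠] ρ] (fun _ => (1 : ℝ))

lemma sdiff_mem_nhdsNE {X : Type*} [TopologicalSpace X] [T1Space X] {U S : Set X} {ρ : X}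
    (hU : IsOpen U) (hS : (S ∩ U).Finite) (hρ : ρ ∈ U) : U \ S ∈ 𝓝[≠] ρ := by
  have hne : ((S ∩ U) \ {ρ})ᶜ ∈ 𝓝 ρ := hS.sdiff.isClosed.isOpen_compl.mem_nhds (by simp)
  filter_upwards [self_mem_nhdsWithin, mem_nhdsWithin_of_mem_nhds hne,
    mem_nhdsWithin_of_mem_nhds (hU.mem_nhds hρ)] with z hzρ hz hzU
  exact ⟨hzU, fun hzS => hz ⟨⟨hzS, hzU⟩, hzρ⟩⟩

lemma ne_conj_of_mem_UH {ρ z : ℂ} (hρ : ρ ∈ UH) (hz : z ∈ UH) : z ≠ conj ρ := by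
  rintro rfl
  have : 0 < -ρ.im := hz
  exact (neg_pos.1 this).not_gt hρ

lemma mem_compl_pair_of_mem_UH {ρ z : ℂ} (hρ : ρ ∈ UH) (hz : z ∈ UH) (hne : z ≠ ρ) :
    z ∈ ({ρ, conj ρ}ᶜ : Set ℂ) := by
  simp [hne, ne_conj_of_mem_UH hρ hz]

lemma exists_differentiableOn_eq_add_sum_polePart {k : ℕ} {V S : Set ℂ} {f : ℂ → ℂ}
    (hV : IsOpen V) (hVUH : V ⊆ UH) (hS : (S ∩ V).Finite) (hf : DifferentiableOn ℂ f (V \ S))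
    (hpole : ∀ ρ ∈ S ∩ V, HasRealEllipticPoleAt k f ρ) :
    ∃ (a : ℂ → ℝ) (h : ℂ → ℂ), DifferentiableOn ℂ h V ∧
      ∀ z ∈ V \ S, f z = h z + ∑ ρ ∈ hS.toFinset, a ρ * polePart k ρ z := by
  choose! a ha using hpole
  have hT {ρ : ℂ} : ρ ∈ hS.toFinset ↔ ρ ∈ S ∩ V := hS.mem_toFinset
  have hpp {ρ z : ℂ} (hρ : ρ ∈ S ∩ V) (hz : z ∈ V) (hne : z ≠ ρ) :
      DifferentiableAt ℂ (polePart k ρ) z :=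
    differentiableAt_polePart k (hVUH hρ.2 : 0 < ρ.im).ne'
      (mem_compl_pair_of_mem_UH (hVUH hρ.2) (hVUH hz) hne)
  have hd : DifferentiableOn ℂ (fun z => f z - ∑ ρ ∈ hS.toFinset, a ρ * polePart k ρ z)
      (V \ (S ∩ V)) := by
    rw [sdiff_inter_self_eq_sdiff]
    refine hf.sub (.fun_sum fun ρ hρ z hz => ?_)
    have hne : z ≠ ρ := by rintro rfl; exact hz.2 (hT.1 hρ).1
    exact ((hpp (hT.1 hρ) hz.1 hne).const_mul _).differentiableWithinAt
  have hb : ∀ ρ ∈ V ∩ (S ∩ V),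
      (fun z => f z - ∑ ρ ∈ hS.toFinset, a ρ * polePart k ρ z) =O[𝓝[≠] ρ] (fun _ => (1 : ℝ)) := by
    rintro ρ ⟨-, hρ⟩
    have hsum : (fun z => ∑ ρ' ∈ hS.toFinset.erase ρ, a ρ' * polePart k ρ' z)
        =O[𝓝[≠] ρ] (fun _ => (1 : ℝ)) := by
      refine IsBigO.fun_sum fun ρ' hρ' => ?_
      have ⟨hne, hρ'⟩ := Finset.mem_erase.1 hρ'
      exact (((hpp (hT.1 hρ') hρ.2 hne.symm).continuousAt.tendsto.const_mul _).isBigO_one ℝ).mono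
        nhdsWithin_le_nhds
    refine ((ha ρ hρ).sub hsum).congr_left fun z => ?_
    rw [← Finset.add_sum_erase _ _ (hT.2 hρ), sub_sub]
  obtain ⟨h, hh, hheq⟩ := exists_differentiableOn_eqOn_sdiff_of_isBigO_one hV hS hd hb
  refine ⟨a, h, hh, fun z hz => ?_⟩
  rw [hheq ⟨hz.1, fun hz' => hz.2 hz'.1⟩, sub_add_cancel]

theorem hasRealPrimitiveOn_ball {N : ℕ} {S : Set ℂ} {f : ℂ → ℂ} {c : ℂ} {r : ℝ}
    (hUH : ball c r ⊆ UH) (hS : (S ∩ ball c r).Finite) (hf : DifferentiableOn ℂ f (ball c r \ S))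
    (hpole : ∀ ρ ∈ S ∩ ball c r, HasRealEllipticPoleAt (N + 1) f ρ) (A B C : ℝ) :
    HasRealPrimitiveOn (fun z => I ^ N * (f z * realQuadratic A B C z ^ N)) (ball c r \ S) := by
  obtain ⟨a, h, hh, hfh⟩ := exists_differentiableOn_eq_add_sum_polePart isOpen_ball hUH hS hf hpole
  have hhol : HasRealPrimitiveOn (fun z => I ^ N * (h z * realQuadratic A B C z ^ N))
      (ball c r) := by
    refine .of_isExactOn (DifferentiableOn.isExactOn_ball ?_)
    exact (hh.mul (differentiable_realQuadratic A B C |>.pow N).differentiableOn).const_mul _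
  have hpolar : HasRealPrimitiveOn (fun z => ∑ ρ ∈ hS.toFinset,
      a ρ * (I ^ N * (polePart (N + 1) ρ z * realQuadratic A B C z ^ N))) (ball c r \ S) := by
    refine .sum fun ρ hρ => ((hasRealPrimitiveOn_polePart N A B C ?_).ofReal_mul _).mono ?_
    · exact (hUH (hS.mem_toFinset.1 hρ).2 : 0 < ρ.im).ne'
    · intro z hz
      have ⟨hρS, hρ⟩ := hS.mem_toFinset.1 hρ
      exact mem_compl_pair_of_mem_UH (hUH hρ) (hUH hz.1) fun h => hz.2 (h ▸ hρS)
  refine ((hhol.mono sdiff_subset).add hpolar).congr fun z hz => ?_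
  rw [hfh z hz, add_mul, mul_add, Finset.sum_mul, Finset.mul_sum]
  exact congrArg _ (Finset.sum_congr rfl fun ρ _ => by ring)

lemma intervalIntegrable_mul_deriv_of_contDiffOn {A : Type*} [NormedRing A] [NormedAlgebra ℝ A]
    {φ σ : ℝ → A} {a b : ℝ} (hab : a ≤ b)
    (hφ : ContinuousOn φ (Icc a b)) (hσ : ContDiffOn ℝ 1 σ (Icc a b)) :
    IntervalIntegrable (fun x => φ x * deriv σ x) volume a b := by
  rcases hab.eq_or_lt with rfl | hlt
  · exact .refl
  have hcont : ContinuousOn (fun x => φ x * derivWithin σ (Icc a b) x) (Icc a b) :=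
    hφ.mul (hσ.continuousOn_derivWithin (uniqueDiffOn_Icc hlt) le_rfl)
  refine (intervalIntegrable_congr_uIoo fun x hx => ?_).1 (hcont.intervalIntegrable_of_Icc hab)
  rw [uIoo_of_le hab] at hx
  simp only [derivWithin_of_mem_nhds (Icc_mem_nhds hx.1 hx.2)]

lemma re_integral_mul_deriv_eq_sub {V : Set ℂ} {g : ℂ → ℂ} {H : ℂ → ℝ}
    (hH : ∀ z ∈ V, HasFDerivAt H (reForm (g z)) z) {σ : ℝ → ℂ} {a b : ℝ} (hab : a ≤ b)
    (hσ : ContDiffOn ℝ 1 σ (Icc a b)) (hσV : MapsTo σ (Icc a b) V)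
    (hint : IntervalIntegrable (fun x => g (σ x) * deriv σ x) volume a b) :
    (∫ x in a..b, g (σ x) * deriv σ x).re = H (σ b) - H (σ a) := by
  have hHcont : ContinuousOn H V := fun z hz => (hH z hz).continuousAt.continuousWithinAt
  rw [← reCLM_apply, ← reCLM.intervalIntegral_comp_comm hint]
  refine intervalIntegral.integral_eq_sub_of_hasDerivAt_of_le (f := H ∘ σ) hab
    (hHcont.comp hσ.continuousOn hσV) (fun x hx => ?_)
    ⟨reCLM.integrable_comp hint.1, reCLM.integrable_comp hint.2⟩
  have hσx : HasDerivAt σ (deriv σ x) x :=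
    ((hσ.differentiableOn one_ne_zero).differentiableAt (Icc_mem_nhds hx.1 hx.2)).hasDerivAt
  exact (hH (σ x) (hσV (Ioo_subset_Icc_self hx))).comp_hasDerivAt x hσx

lemma PiecewiseC1.exists_partition {σ : ℝ → ℂ} (hσ : PiecewiseC1 σ) :
    ∃ (n : ℕ) (t : ℕ → ℝ), Monotone t ∧ t 0 = 0 ∧ t n = 1 ∧
      ∀ i < n, ContDiffOn ℝ 1 σ (Icc (t i) (t (i + 1))) := by
  obtain ⟨-, n, t, -, ht₀, htn, hle, hC1⟩ := hσ
  refine ⟨n, fun i => t (min i n), monotone_nat_of_le_succ fun i => ?_, by simpa, by simpa,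
    fun i hi => by simpa [hi.le, Nat.succ_le_iff.2 hi] using hC1 i hi⟩
  rcases lt_or_ge i n with hi | hi
  · simpa [hi.le, Nat.succ_le_iff.2 hi] using hle i hi
  · simp [hi, hi.trans i.le_succ]

theorem re_pathInt_eq_sub {V : Set ℂ} {g : ℂ → ℂ} {H : ℂ → ℝ}
    (hH : ∀ z ∈ V, HasFDerivAt H (reForm (g z)) z) (hg : ContinuousOn g V) {σ : ℝ → ℂ}
    (hσ : PiecewiseC1 σ) (hσV : MapsTo σ (Icc 0 1) V) :
    (pathInt g σ).re = H (σ 1) - H (σ 0) := by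
  obtain ⟨n, t, htmono, ht₀, htn, hC1⟩ := hσ.exists_partition
  have hmaps {i : ℕ} (hi : i < n) : MapsTo σ (Icc (t i) (t (i + 1))) V :=
    hσV.mono_left (Icc_subset_Icc (ht₀ ▸ htmono i.zero_le) (htn ▸ htmono hi))
  have hint : ∀ i < n, IntervalIntegrable (fun x => g (σ x) * deriv σ x) volume
      (t i) (t (i + 1)) := fun i hi =>
    intervalIntegrable_mul_deriv_of_contDiffOn (htmono i.le_succ)
      (hg.comp (hC1 i hi).continuousOn (hmaps hi)) (hC1 i hi)
  calc (pathInt g σ).re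
      = (∑ i ∈ Finset.range n, ∫ x in t i..t (i + 1), g (σ x) * deriv σ x).re := by
        rw [intervalIntegral.sum_integral_adjacent_intervals hint, ht₀, htn, pathInt]
    _ = ∑ i ∈ Finset.range n, (H (σ (t (i + 1))) - H (σ (t i))) := by
        rw [re_sum]
        exact Finset.sum_congr rfl fun i hi => re_integral_mul_deriv_eq_sub hH (htmono i.le_succ)
          (hC1 i (Finset.mem_range.1 hi)) (hmaps (Finset.mem_range.1 hi))
          (hint i (Finset.mem_range.1 hi))
    _ = H (σ 1) - H (σ 0) := by rw [Finset.sum_range_sub (fun i => H (σ (t i))), ht₀, htn]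

lemma HasRealPrimitiveOn.re_pathInt_eq {V : Set ℂ} {g : ℂ → ℂ} (h : HasRealPrimitiveOn g V)
    (hg : ContinuousOn g V) {σ₁ σ₂ : ℝ → ℂ} (hσ₁ : PiecewiseC1 σ₁) (hσ₂ : PiecewiseC1 σ₂)
    (h₀ : σ₁ 0 = σ₂ 0) (h₁ : σ₁ 1 = σ₂ 1) (hV₁ : MapsTo σ₁ (Icc 0 1) V)
    (hV₂ : MapsTo σ₂ (Icc 0 1) V) : (pathInt g σ₁).re = (pathInt g σ₂).re := by
  obtain ⟨H, hH⟩ := h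
  rw [re_pathInt_eq_sub hH hg hσ₁ hV₁, re_pathInt_eq_sub hH hg hσ₂ hV₂, h₀, h₁]

lemma pathInt_const_mul (c : ℂ) (g : ℂ → ℂ) (σ : ℝ → ℂ) :
    pathInt (fun z => c * g z) σ = c * pathInt g σ := by
  simp only [pathInt, mul_assoc, intervalIntegral.integral_const_mul]

lemma UH_eq_range_coe : UH = range ((↑) : ℍ → ℂ) := UpperHalfPlane.range_coe.symm

lemma isCompact_preimage_coe {K : Set ℂ} (hK : IsCompact K) (hKUH : K ⊆ UH) :
    IsCompact (((↑) : ℍ → ℂ) ⁻¹' K) :=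
  UpperHalfPlane.isEmbedding_coe.isInducing.isCompact_preimage' hK (UH_eq_range_coe ▸ hKUH)

lemma exists_subset_ball_closedBall_subset_UH {K : Set ℂ} (hK : IsCompact K) (hKUH : K ⊆ UH) :
    ∃ (c : ℂ) (r : ℝ), K ⊆ ball c r ∧ closedBall c r ⊆ UH := by
  obtain ⟨r, hr⟩ := (isCompact_preimage_coe hK hKUH).isBounded.subset_ball UpperHalfPlane.I
  -- Hyperbolic balls are Euclidean balls with a different center and radius.
  refine ⟨UpperHalfPlane.center .I r, UpperHalfPlane.im .I * Real.sinh r, ?_, ?_⟩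
  · rw [← UpperHalfPlane.image_coe_ball,
      ← image_preimage_eq_of_subset (s := K) (UH_eq_range_coe ▸ hKUH)]
    exact image_mono hr
  · rw [← UpperHalfPlane.image_coe_closedBall, UH_eq_range_coe]
    exact image_subset_range _ _

lemma moeb_coe (γ : SL2Z) (τ : ℍ) : moeb γ τ = ↑(γ • τ) := by
  simp only [moeb, UpperHalfPlane.coe_specialLinearGroup_apply, algebraMap_int_eq, eq_intCast,
    ofReal_intCast]

lemma finite_orbit_inter {ρ : ℂ} (hρ : ρ ∈ UH) {K : Set ℂ} (hK : IsCompact K) (hKUH : K ⊆ UH) :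
    (orbit ρ ∩ K).Finite := by
  rw [UH_eq_range_coe] at hρ
  obtain ⟨τ, rfl⟩ := hρ
  have hfin := finite_disjoint_inter_image (Γ := 𝒮ℒ) (isCompact_singleton (x := τ))
    (isCompact_preimage_coe hK hKUH)
  refine (hfin.image fun γ => ((γ • τ : ℍ) : ℂ)).subset ?_
  rintro _ ⟨⟨γ, rfl⟩, hγK⟩
  rw [moeb_coe] at hγK ⊢
  refine ⟨⟨Matrix.SpecialLinearGroup.mapGL ℝ γ, γ, rfl⟩, ?_, rfl⟩
  exact ⟨_, mem_image_of_mem _ rfl, hγK⟩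

lemma finite_iUnion_orbit_inter {ι : Type*} [Finite ι] {ϱ : ι → ℂ} (hϱ : ∀ i, ϱ i ∈ UH)
    {K : Set ℂ} (hK : IsCompact K) (hKUH : K ⊆ UH) : ((⋃ i, orbit (ϱ i)) ∩ K).Finite := by
  rw [iUnion_inter]
  exact finite_iUnion fun i => finite_orbit_inter (hϱ i) hK hKUH

lemma hasRealEllipticPoleAt_of_norm_le {k : ℕ} {f : ℂ → ℂ} {ρ : ℂ} {D : Set ℂ} (hD : D ∈ 𝓝[≠] ρ)
    (h : ∃ a : ℝ, ∃ δ > 0, ∃ M : ℝ, ∀ z ∈ (ball ρ δ \ {ρ}) ∩ D, ‖f z - a * polePart k ρ z‖ ≤ M) :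
    HasRealEllipticPoleAt k f ρ := by
  obtain ⟨a, δ, hδ, M, hM⟩ := h
  refine ⟨a, (isBigO_one_iff ℝ).2 (isBoundedUnder_of_eventually_le (a := M) ?_)⟩
  filter_upwards [hD, self_mem_nhdsWithin, mem_nhdsWithin_of_mem_nhds (ball_mem_nhds ρ hδ)]
    with z hzD hne hzδ
  exact hM z ⟨⟨hzδ, hne⟩, hzD⟩

theorem geodesic_pairing_path_independent_general (k : ℕ) (hk : 1 ≤ k) (S : Set ℂ)
    (hS : ∀ K, IsCompact K → K ⊆ UH → (S ∩ K).Finite) (f : ℂ → ℂ)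
    (hf : DifferentiableOn ℂ f (UH \ S))
    (hpole : ∀ ρ ∈ S, ∃ aρ : ℝ, ∃ δ > 0, ∃ Cb : ℝ,
      ∀ z ∈ (ball ρ δ \ {ρ}) ∩ (UH \ S), ‖f z - aρ * polePart k ρ z‖ ≤ Cb)
    (A B C : ℝ) (σ₁ σ₂ : ℝ → ℂ) (hσ₁ : PiecewiseC1 σ₁) (hσ₂ : PiecewiseC1 σ₂)
    (h₀ : σ₁ 0 = σ₂ 0) (h₁ : σ₁ 1 = σ₂ 1)
    (hin₁ : ∀ t ∈ Icc (0 : ℝ) 1, σ₁ t ∈ UH \ S)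
    (hin₂ : ∀ t ∈ Icc (0 : ℝ) 1, σ₂ t ∈ UH \ S) :
    (I ^ (k - 1) * pathInt (fun z => f z * realQuadratic A B C z ^ (k - 1)) σ₁).re =
      (I ^ (k - 1) * pathInt (fun z => f z * realQuadratic A B C z ^ (k - 1)) σ₂).re := by
  obtain ⟨N, rfl⟩ := Nat.exists_eq_add_of_le' hk
  obtain ⟨c, r, hKball, hballUH⟩ := exists_subset_ball_closedBall_subset_UH
    ((isCompact_Icc.image_of_continuousOn hσ₁.1).union (isCompact_Icc.image_of_continuousOn hσ₂.1))
    (union_subset (image_subset_iff.2 fun t ht => (hin₁ t ht).1)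
      (image_subset_iff.2 fun t ht => (hin₂ t ht).1))
  have hsub : ball c r ⊆ UH := ball_subset_closedBall.trans hballUH
  have hSball : (S ∩ ball c r).Finite :=
    (hS _ (isCompact_closedBall c r) hballUH).subset
      (inter_subset_inter_right S ball_subset_closedBall)
  have hfball : DifferentiableOn ℂ f (ball c r \ S) := hf.mono (sdiff_subset_sdiff_left hsub)
  have hpoleball : ∀ ρ ∈ S ∩ ball c r, HasRealEllipticPoleAt (N + 1) f ρ := fun ρ hρ =>
    hasRealEllipticPoleAt_of_norm_le
      (mem_of_superset (sdiff_mem_nhdsNE isOpen_ball hSball hρ.2) (sdiff_subset_sdiff_left hsub))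
      (hpole ρ hρ.1)
  have hcont : ContinuousOn (fun z => I ^ N * (f z * realQuadratic A B C z ^ N)) (ball c r \ S) :=
    (hfball.continuousOn.mul
      ((differentiable_realQuadratic A B C).continuous.pow N).continuousOn).const_mul _
  simp only [Nat.add_sub_cancel, ← pathInt_const_mul]
  exact (hasRealPrimitiveOn_ball hsub hSball hfball hpoleball A B C).re_pathInt_eq hcont hσ₁ hσ₂
    h₀ h₁ (fun t ht => ⟨hKball (.inl ⟨t, ht, rfl⟩), (hin₁ t ht).2⟩)
    fun t ht => ⟨hKball (.inr ⟨t, ht, rfl⟩), (hin₂ t ht).2⟩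

lemma geodFactor_mul_pathInt (k : ℕ) (γ : SL2Z) (f : ℂ → ℂ) (σ : ℝ → ℂ) :
    geodFactor k γ * pathInt (fun z => f z * Qpoly γ z ^ (k - 1)) σ =
      I ^ (k - 1) * pathInt (fun z => f z * realQuadratic (γ.1 1 0 / √(discr γ))
        ((γ.1 1 1 - γ.1 0 0) / √(discr γ)) (-γ.1 0 1 / √(discr γ)) z ^ (k - 1)) σ := by
  rw [← pathInt_const_mul, ← pathInt_const_mul]
  congr 1 with z
  have hQ : realQuadratic (γ.1 1 0 / √(discr γ)) ((γ.1 1 1 - γ.1 0 0) / √(discr γ))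
      (-γ.1 0 1 / √(discr γ)) z = Qpoly γ z / √(discr γ) := by
    simp only [realQuadratic, Qpoly]
    push_cast
    ring
  rw [hQ, geodFactor, div_pow, div_pow]
  ring

/-- Path independence of the geodesic pairing: if `f` is holomorphic on `ℍ ∖ S`, where `S`
is a finite union of `SL₂(ℤ)`-orbits, transforms with weight `2k`, and has poles of order
`k` with *real* leading elliptic coefficients at the points of `S`, then for every primitive
hyperbolic `γ` and `z₀ ∈ ℍ ∖ S`, the value
`Re((i/√(d_γ))^(k−1) ∫_σ f(z)·Q_γ(z,1)^(k−1) dz)` is the same for all piecewise `C¹`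
paths `σ` in `ℍ ∖ S` from `z₀` to `γz₀`. -/
theorem geodesic_pairing_path_independent (k : ℕ) (hk : 2 ≤ k) (n : ℕ) (ϱ : Fin n → ℂ)
    (hϱ : ∀ i, ϱ i ∈ UH) (S : Set ℂ) (hS : S = ⋃ i, orbit (ϱ i)) (f : ℂ → ℂ)
    (hf : DifferentiableOn ℂ f (UH \ S))
    (htrans : ∀ γ : SL2Z, ∀ z ∈ UH \ S,
      f (moeb γ z) = ((γ.1 1 0 : ℂ) * z + (γ.1 1 1 : ℂ)) ^ (2 * k) * f z)
    (hpole : ∀ ρ ∈ S, ∃ aρ : ℝ, ∃ δ > 0, ∃ Cb : ℝ,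
      ∀ z ∈ (Metric.ball ρ δ \ {ρ}) ∩ (UH \ S),
        ‖f z - (aρ : ℂ) * polePart k ρ z‖ ≤ Cb)
    (γ : SL2Z) (hhyp : IsHyperbolic γ) (hprim : IsPrimitive γ)
    (z₀ : ℂ) (hz₀ : z₀ ∈ UH \ S) (σ₁ σ₂ : ℝ → ℂ)
    (hσ₁ : PiecewiseC1 σ₁) (hσ₂ : PiecewiseC1 σ₂)
    (h10 : σ₁ 0 = z₀) (h11 : σ₁ 1 = moeb γ z₀)
    (h20 : σ₂ 0 = z₀) (h21 : σ₂ 1 = moeb γ z₀)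
    (hin1 : ∀ t ∈ Set.Icc (0 : ℝ) 1, σ₁ t ∈ UH \ S)
    (hin2 : ∀ t ∈ Set.Icc (0 : ℝ) 1, σ₂ t ∈ UH \ S) :
    (geodFactor k γ * pathInt (fun z => f z * Qpoly γ z ^ (k - 1)) σ₁).re =
      (geodFactor k γ * pathInt (fun z => f z * Qpoly γ z ^ (k - 1)) σ₂).re := by
  simp only [geodFactor_mul_pathInt]
  exact geodesic_pairing_path_independent_general k (by lia) S
    (fun _ => hS ▸ finite_iUnion_orbit_inter hϱ) f hf hpole _ _ _ σ₁ σ₂ hσ₁ hσ₂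
    (h10.trans h20.symm) (h11.trans h21.symm) hin1 hin2
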